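/- arXiv:1205.0543 — 2 statements merged into one kernel-verified Lean document; each statement's English description precedes it below -/
import Mathlib

section
/- Let S: ℝ×ℝ³ → ℝ be differentiable. For every (t,x), det(∂_t S(t,x) I₄ + D(x, ∇_x S(t,x))) = 0 if and only if ∂_t S(t,x) + h⁺(x, ∇_x S(t,x)) = 0 or ∂_t S(t,x) + h⁻(x, ∇_x S(t,x)) = 0; i.e. the WKB system admits a nontrivial leading amplitude exactly when S satisfies one of the two eikonal equations. -/
open Matrix Complex BigOperators

noncomputable section

/-- Points of `ℝ³` as functions `Fin 3 → ℝ`. -/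
abbrev V3 := Fin 3 → ℝ

/-- The three Dirac alpha matrices `α¹, α², α³`. -/
def alphaM : Fin 3 → Matrix (Fin 4) (Fin 4) ℂ :=
  ![!![0,0,0,1; 0,0,1,0; 0,1,0,0; 1,0,0,0],
    !![0,0,0,-I; 0,0,I,0; 0,-I,0,0; I,0,0,0],
    !![0,0,1,0; 0,0,0,-1; 1,0,0,0; 0,-1,0,0]]

/-- The Dirac beta matrix `β`. -/
def betaM : Matrix (Fin 4) (Fin 4) ℂ := !![1,0,0,0; 0,1,0,0; 0,0,-1,0; 0,0,0,-1]

/-- `α · v = v₁ α¹ + v₂ α² + v₃ α³` for `v ∈ ℝ³`. -/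
def alphaDot (v : V3) : Matrix (Fin 4) (Fin 4) ℂ := ∑ k, (v k : ℂ) • alphaM k

/-- The Dirac symbol `D(x,ξ) = α·(ξ − A(x)) + β + V(x) I₄`. -/
def DiracD (V : V3 → ℝ) (A : V3 → V3) (x ξ : V3) : Matrix (Fin 4) (Fin 4) ℂ :=
  alphaDot (ξ - A x) + betaM + (V x : ℂ) • 1

/-- `λ(x,ξ) = √(|ξ − A(x)|² + 1)`. -/
def lam (A : V3 → V3) (x ξ : V3) : ℝ := Real.sqrt ((∑ k, (ξ k - A x k)^2) + 1)

/-- `h^±(x,ξ) = ±λ(x,ξ) + V(x)`, with `s = ±1` the sign. -/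
def hpm (s : ℝ) (V : V3 → ℝ) (A : V3 → V3) (x ξ : V3) : ℝ := s * lam A x ξ + V x

theorem det_aux (p : ℝ) (V : V3 → ℝ) (A : V3 → V3) (x ξ : V3) :
    (((p : ℝ) : ℂ) • (1 : Matrix (Fin 4) (Fin 4) ℂ) + DiracD V A x ξ).det
      = ((((p + V x) ^ 2 - ((∑ k, (ξ k - A x k)^2) + 1)) ^ 2 : ℝ) : ℂ) := by
  have h : ((p : ℝ) : ℂ) • (1 : Matrix (Fin 4) (Fin 4) ℂ) + DiracD V A x ξ
      = !![(p:ℂ) + V x + 1, 0, ((ξ 2 - A x 2 : ℝ) : ℂ), (ξ 0 - A x 0 : ℝ) - (ξ 1 - A x 1 : ℝ) * I;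
          0, (p:ℂ) + V x + 1, (ξ 0 - A x 0 : ℝ) + (ξ 1 - A x 1 : ℝ) * I, -((ξ 2 - A x 2 : ℝ) : ℂ);
          ((ξ 2 - A x 2 : ℝ) : ℂ), (ξ 0 - A x 0 : ℝ) - (ξ 1 - A x 1 : ℝ) * I, (p:ℂ) + V x - 1, 0;
          (ξ 0 - A x 0 : ℝ) + (ξ 1 - A x 1 : ℝ) * I, -((ξ 2 - A x 2 : ℝ) : ℂ), 0, (p:ℂ) + V x - 1] := by
    ext i j
    fin_cases i <;> fin_cases j <;>
      simp [DiracD, alphaDot, alphaM, betaM, Fin.sum_univ_three] <;> ring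
  rw [h, Fin.sum_univ_three]
  clear h
  generalize ξ 0 - A x 0 = a
  generalize ξ 1 - A x 1 = b
  generalize ξ 2 - A x 2 = c
  simp [Matrix.det_succ_row_zero, Fin.sum_univ_succ, Fin.succAbove]
  have hI := Complex.I_sq
  ring_nf
  have h4 : I ^ 4 = 1 := Complex.I_pow_four
  simp only [hI, h4]
  ring

/-- for differentiable `S(t,x)`, `det(∂ₜS I₄ + D(x, ∇ₓS)) = 0` iff
`∂ₜS + h⁺(x,∇ₓS) = 0` or `∂ₜS + h⁻(x,∇ₓS) = 0` (the eikonal equations). -/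
theorem wkb_eikonal_iff (V : V3 → ℝ) (A : V3 → V3)
    (S : ℝ × V3 → ℝ) (hS : Differentiable ℝ S) (t : ℝ) (x : V3) :
    ((((fderiv ℝ S (t, x) (1, 0) : ℝ) : ℂ) • (1 : Matrix (Fin 4) (Fin 4) ℂ)
        + DiracD V A x (fun k => fderiv ℝ S (t, x) (0, Pi.single k 1))).det = 0
      ↔ fderiv ℝ S (t, x) (1, 0)
            + hpm 1 V A x (fun k => fderiv ℝ S (t, x) (0, Pi.single k 1)) = 0
        ∨ fderiv ℝ S (t, x) (1, 0)
            + hpm (-1) V A x (fun k => fderiv ℝ S (t, x) (0, Pi.single k 1)) = 0) := by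
  generalize (fun k => fderiv ℝ S (t, x) (0, Pi.single k 1)) = ξ
  generalize fderiv ℝ S (t, x) (1, 0) = p
  have hl : lam A x ξ ^ 2 = (∑ k, (ξ k - A x k)^2) + 1 :=
    Real.sq_sqrt (by positivity)
  rw [det_aux, ← hl, Complex.ofReal_eq_zero, sq_eq_zero_iff, ← mul_eq_zero]
  unfold hpm
  constructor <;> intro h <;> linear_combination h
end
end

section
/- Let h: ℝ³×ℝ³ → ℝ be C², let t ↦ (y(t), ξ(t)) be a C¹ curve, and let P, R: I → M₃(ℂ) be differentiable solutions of P′ = (∇_{ξy}h) P + (∇_{ξξ}h) R and R′ = −(∇_{yy}h) P − (∇_{yξ}h) R along the curve. Then the matrix-valued functions t ↦ P(t)ᵀR(t) − R(t)ᵀP(t) and t ↦ P(t)*R(t) − R(t)*P(t) (with * the conjugate transpose) are constant on I. -/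
open Matrix Complex BigOperators

noncomputable section

attribute [local instance] Matrix.normedAddCommGroup Matrix.normedSpace

/-- The coordinate direction `i` in the `y`-slot of `ℝ³ × ℝ³`. -/
def ey (i : Fin 3) : V3 × V3 := (Pi.single i 1, 0)

/-- The coordinate direction `i` in the `ξ`-slot of `ℝ³ × ℝ³`. -/
def eXi (i : Fin 3) : V3 × V3 := (0, Pi.single i 1)

/-- `(∇_{yy}h)_{ij} = ∂²h/∂y_i∂y_j`. -/
def Hyy (h : V3 × V3 → ℝ) (p : V3 × V3) : Matrix (Fin 3) (Fin 3) ℝ :=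
  Matrix.of fun i j => fderiv ℝ (fun q => fderiv ℝ h q (ey j)) p (ey i)

/-- `(∇_{yξ}h)_{ij} = ∂²h/∂y_i∂ξ_j`. -/
def Hyxi (h : V3 × V3 → ℝ) (p : V3 × V3) : Matrix (Fin 3) (Fin 3) ℝ :=
  Matrix.of fun i j => fderiv ℝ (fun q => fderiv ℝ h q (eXi j)) p (ey i)

/-- `(∇_{ξy}h)_{ij} = ∂²h/∂ξ_i∂y_j`, so that `∇_{ξy}h = (∇_{yξ}h)ᵀ` for `C²` functions. -/
def Hxiy (h : V3 × V3 → ℝ) (p : V3 × V3) : Matrix (Fin 3) (Fin 3) ℝ :=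
  Matrix.of fun i j => fderiv ℝ (fun q => fderiv ℝ h q (ey j)) p (eXi i)

/-- `(∇_{ξξ}h)_{ij} = ∂²h/∂ξ_i∂ξ_j`. -/
def Hxixi (h : V3 × V3 → ℝ) (p : V3 × V3) : Matrix (Fin 3) (Fin 3) ℝ :=
  Matrix.of fun i j => fderiv ℝ (fun q => fderiv ℝ h q (eXi j)) p (eXi i)

lemma sic_entry {M : ℝ → Matrix (Fin 3) (Fin 3) ℂ} {M' : Matrix (Fin 3) (Fin 3) ℂ} {I : Set ℝ} {t : ℝ}
    (hM : HasDerivWithinAt M M' I t) (i j : Fin 3) :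
    HasDerivWithinAt (fun s => M s i j) (M' i j) I t :=
  hasDerivWithinAt_pi.1 (hasDerivWithinAt_pi.1 hM i) j

lemma sic_const (I : Set ℝ) (hI : I.OrdConnected)
    (A B C D P R Q S : ℝ → Matrix (Fin 3) (Fin 3) ℂ)
    (hA : ∀ t, (A t)ᵀ = D t) (hB : ∀ t, (B t)ᵀ = B t) (hC : ∀ t, (C t)ᵀ = C t)
    (hP : ∀ t ∈ I, ∀ i j, HasDerivWithinAt (fun s => P s i j) ((A t * P t + B t * R t) i j) I t)
    (hR : ∀ t ∈ I, ∀ i j, HasDerivWithinAt (fun s => R s i j) ((-(C t * P t) - D t * R t) i j) I t)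
    (hQ : ∀ t ∈ I, ∀ i j, HasDerivWithinAt (fun s => Q s i j) ((A t * Q t + B t * S t) i j) I t)
    (hS : ∀ t ∈ I, ∀ i j, HasDerivWithinAt (fun s => S s i j) ((-(C t * Q t) - D t * S t) i j) I t)
    (t₁ : ℝ) (h₁ : t₁ ∈ I) (t₂ : ℝ) (h₂ : t₂ ∈ I) :
    (Q t₁)ᵀ * R t₁ - (S t₁)ᵀ * P t₁ = (Q t₂)ᵀ * R t₂ - (S t₂)ᵀ * P t₂ := by
  ext i j
  have key : ∀ t ∈ I, HasDerivWithinAt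
      (fun s => ((Q s)ᵀ * R s - (S s)ᵀ * P s) i j) 0 I t := by
    intro t ht
    have h1 : HasDerivWithinAt (fun s => ((Q s)ᵀ * R s - (S s)ᵀ * P s) i j)
        (((A t * Q t + B t * S t)ᵀ * R t + (Q t)ᵀ * (-(C t * P t) - D t * R t)
          - ((-(C t * Q t) - D t * S t)ᵀ * P t + (S t)ᵀ * (A t * P t + B t * R t))) i j) I t := by
      have h2 := (HasDerivWithinAt.fun_sum (u := Finset.univ)
        (fun k _ => (hQ t ht k i).mul (hR t ht k j))).sub
        (HasDerivWithinAt.fun_sum (u := Finset.univ)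
        (fun k _ => (hS t ht k i).mul (hP t ht k j)))
      refine HasDerivWithinAt.congr_deriv (f' := _) h2 (Eq.symm ?_)
      rw [Matrix.sub_apply, Matrix.add_apply, Matrix.add_apply, Finset.sum_add_distrib,
        Finset.sum_add_distrib]
      rfl
    refine h1.congr_deriv ?_
    have : (A t * Q t + B t * S t)ᵀ * R t + (Q t)ᵀ * (-(C t * P t) - D t * R t)
          - ((-(C t * Q t) - D t * S t)ᵀ * P t + (S t)ᵀ * (A t * P t + B t * R t)) = 0 := by
      simp only [Matrix.transpose_add, Matrix.transpose_sub, Matrix.transpose_neg,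
        Matrix.transpose_mul, hB, hC, ← hA, Matrix.transpose_transpose]
      noncomm_ring
    rw [this]; rfl
  have := hI.convex.norm_image_sub_le_of_norm_hasDerivWithin_le (C := 0) key (by simp) h₂ h₁
  rw [zero_mul] at this
  exact sub_eq_zero.1 (norm_le_zero_iff.1 this)

lemma sic_symm (h : V3 × V3 → ℝ) (hh : ContDiff ℝ 2 h) (p u v : V3 × V3) :
    fderiv ℝ (fun q => fderiv ℝ h q u) p v = fderiv ℝ (fun q => fderiv ℝ h q v) p u := by
  have hd : DifferentiableAt ℝ (fderiv ℝ h) p :=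
    (hh.fderiv_right (m := 1) (by norm_num)).differentiable (by norm_num) p
  have hs := (hh.contDiffAt (x := p)).isSymmSndFDerivAt (by simp)
  rw [fderiv_clm_apply hd (differentiableAt_const _), fderiv_clm_apply hd (differentiableAt_const _)]
  simpa using hs v u

lemma sic_conj {I : Set ℝ} {t : ℝ} {f : ℝ → ℂ} {f' : ℂ} (hf : HasDerivWithinAt f f' I t) :
    HasDerivWithinAt (fun s => star (f s)) (star f') I t := hf.star

/-- for solutions `P, R` of the linear system
`P' = (∇_{ξy}h)P + (∇_{ξξ}h)R`, `R' = −(∇_{yy}h)P − (∇_{yξ}h)R` along a `C¹` curve on an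
interval `I`, the functions `PᵀR − RᵀP` and `P*R − R*P` are constant on `I`. -/
theorem symplectic_invariants_constant (h : V3 × V3 → ℝ) (hh : ContDiff ℝ 2 h)
    (I : Set ℝ) (hI : I.OrdConnected)
    (y ξ : ℝ → V3) (hcurve : ContDiffOn ℝ 1 (fun t => (y t, ξ t)) I)
    (P R : ℝ → Matrix (Fin 3) (Fin 3) ℂ)
    (hP : ∀ t ∈ I, HasDerivWithinAt P
      ((Hxiy h (y t, ξ t)).map Complex.ofReal * P t
        + (Hxixi h (y t, ξ t)).map Complex.ofReal * R t) I t)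
    (hR : ∀ t ∈ I, HasDerivWithinAt R
      (-((Hyy h (y t, ξ t)).map Complex.ofReal * P t)
        - (Hyxi h (y t, ξ t)).map Complex.ofReal * R t) I t) :
    ∀ t₁ ∈ I, ∀ t₂ ∈ I,
      ((P t₁)ᵀ * R t₁ - (R t₁)ᵀ * P t₁ = (P t₂)ᵀ * R t₂ - (R t₂)ᵀ * P t₂) ∧
      ((P t₁)ᴴ * R t₁ - (R t₁)ᴴ * P t₁ = (P t₂)ᴴ * R t₂ - (R t₂)ᴴ * P t₂) := by
  have hA : ∀ t, ((Hxiy h (y t, ξ t)).map Complex.ofReal)ᵀ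
      = (Hyxi h (y t, ξ t)).map Complex.ofReal := by
    intro t; ext i j
    simp only [Hxiy, Hyxi, Matrix.transpose_apply, Matrix.map_apply, Matrix.of_apply]
    rw [sic_symm h hh]
  have hB : ∀ t, ((Hxixi h (y t, ξ t)).map Complex.ofReal)ᵀ
      = (Hxixi h (y t, ξ t)).map Complex.ofReal := by
    intro t; ext i j
    simp only [Hxixi, Matrix.transpose_apply, Matrix.map_apply, Matrix.of_apply]
    rw [sic_symm h hh]
  have hC : ∀ t, ((Hyy h (y t, ξ t)).map Complex.ofReal)ᵀ
      = (Hyy h (y t, ξ t)).map Complex.ofReal := by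
    intro t; ext i j
    simp only [Hyy, Matrix.transpose_apply, Matrix.map_apply, Matrix.of_apply]
    rw [sic_symm h hh]
  have hP' := fun t ht i j => sic_entry (hP t ht) i j
  have hR' := fun t ht i j => sic_entry (hR t ht) i j
  intro t₁ h₁ t₂ h₂
  refine ⟨sic_const I hI _ _ _ _ P R P R hA hB hC hP' hR' hP' hR' t₁ h₁ t₂ h₂,
    sic_const I hI _ _ _ _ P R (fun t => (P t).map star) (fun t => (R t).map star) hA hB hC
      hP' hR' ?_ ?_ t₁ h₁ t₂ h₂⟩
  · intro t ht i j
    refine (sic_conj (hP' t ht i j)).congr_deriv ?_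
    simp [Matrix.mul_apply, Matrix.add_apply, Matrix.sub_apply, Matrix.neg_apply]
  · intro t ht i j
    refine (sic_conj (hR' t ht i j)).congr_deriv ?_
    simp [Matrix.mul_apply, Matrix.add_apply, Matrix.sub_apply, Matrix.neg_apply]
end
end
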